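/- arXiv:math/0204313 — 4 statements merged into one kernel-verified Lean document; each statement's English description precedes it below -/
import Mathlib

section
/- For all θ, θ' ∈ [0,1], ∫₀^∞ g_{2s}(θ,θ') ds = min(θ,θ') - θθ' (the covariance kernel of the standard Brownian bridge, i.e. the Green function of -A with A = (1/2) d²/dθ² and homogeneous Dirichlet boundary conditions equals 2(min(θ,θ') - θθ')). -/
open MeasureTheory Real Filter

/-- Gauss–Weierstrass kernel: fundamental solution of `∂u/∂t = (1/2)∂²u/∂x²` on `ℝ`. -/
noncomputable def heatK (t x : ℝ) : ℝ :=
  (Real.sqrt (2 * Real.pi * t))⁻¹ * Real.exp (-(x ^ 2) / (2 * t))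

/-- Heat kernel on the half-line `(0,∞)` with Dirichlet boundary condition at `0`. -/
noncomputable def heatG (t a b : ℝ) : ℝ := heatK t (a - b) - heatK t (a + b)

/-- Method-of-images series for the Dirichlet heat kernel on `(0,1)`. -/
noncomputable def heatg (t θ θ' : ℝ) : ℝ :=
  ∑' n : ℤ, (heatK t (θ - θ' + 2 * (n : ℝ)) - heatK t (θ + θ' + 2 * (n : ℝ)))

/-- `q_t(θ,θ') = ∫₀ᵗ g_{2s}(θ,θ') ds`. -/
noncomputable def qker (t θ θ' : ℝ) : ℝ := ∫ s in Set.Ioc (0 : ℝ) t, heatg (2 * s) θ θ'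

/-- `q^t(θ,θ') = ∫ₜ^∞ g_{2s}(θ,θ') ds`. -/
noncomputable def qkerTop (t θ θ' : ℝ) : ℝ := ∫ s in Set.Ioi t, heatg (2 * s) θ θ'

lemma heatK_hasSum (s x : ℝ) (hs : 0 < s) :
    HasSum (fun n : ℤ => heatK (2 * s) (x + 2 * (n : ℝ)))
      (HurwitzZeta.cosKernel ((x / 2 : ℝ) : UnitAddCircle) (π * s) / 2) := by
  have hps : 0 < π * s := mul_pos pi_pos hs
  have h := HurwitzZeta.hasSum_int_evenKernel (x / 2) (t := 1 / (π * s)) (by positivity)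
  rw [HurwitzZeta.evenKernel_functional_equation, one_div_one_div, ← Real.sqrt_eq_rpow] at h
  have h2 := h.mul_left ((Real.sqrt (2 * π * (2 * s)))⁻¹)
  have hsq : Real.sqrt (2 * π * (2 * s)) = 2 * Real.sqrt (π * s) := by
    rw [show 2 * π * (2 * s) = 2 ^ 2 * (π * s) by ring, Real.sqrt_mul (by norm_num),
      Real.sqrt_sq (by norm_num)]
  have hpos : 0 < Real.sqrt (π * s) := Real.sqrt_pos.mpr hps
  convert! h2 using 1
  · funext n
    unfold heatK
    congr 2
    field_simp
    ring
  · rw [hsq, Real.sqrt_div zero_le_one, Real.sqrt_one]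
    field_simp

lemma heatg_hasSum (s θ θ' : ℝ) (hs : 0 < s) :
    HasSum (fun n : ℕ => (Real.cos (π * (θ - θ') * (n + 1)) - Real.cos (π * (θ + θ') * (n + 1)))
      * Real.exp (-(π ^ 2 * ((n : ℝ) + 1) ^ 2) * s)) (heatg (2 * s) θ θ') := by
  have hps : 0 < π * s := mul_pos pi_pos hs
  have e : heatg (2 * s) θ θ' = _ :=
    ((heatK_hasSum s (θ - θ') hs).sub (heatK_hasSum s (θ + θ') hs)).tsum_eq
  rw [e]
  have h := ((HurwitzZeta.hasSum_nat_cosKernel₀ ((θ - θ') / 2) hps).sub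
    (HurwitzZeta.hasSum_nat_cosKernel₀ ((θ + θ') / 2) hps)).div_const 2
  convert! h using 1
  · funext n
    rw [show 2 * π * ((θ - θ') / 2) * ((n : ℝ) + 1) = π * (θ - θ') * (n + 1) by ring,
      show 2 * π * ((θ + θ') / 2) * ((n : ℝ) + 1) = π * (θ + θ') * (n + 1) by ring,
      show -π * ((n : ℝ) + 1) ^ 2 * (π * s) = -(π ^ 2 * ((n : ℝ) + 1) ^ 2) * s by ring]
    ring
  · ring

lemma cos_hasSum (x : ℝ) (hx : x ∈ Set.Icc (0 : ℝ) 2) :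
    HasSum (fun n : ℕ => Real.cos (π * x * (n + 1)) * (π ^ 2 * ((n : ℝ) + 1) ^ 2)⁻¹)
      ((x / 2) ^ 2 - x / 2 + 6⁻¹) := by
  have h := hasSum_one_div_nat_pow_mul_cos (k := 1) one_ne_zero (x := x / 2)
    ⟨by linarith [hx.1], by linarith [hx.2]⟩
  have hb : (Polynomial.map (algebraMap ℚ ℝ) (Polynomial.bernoulli (2 * 1))).eval (x / 2)
    = (x / 2) ^ 2 - x / 2 + 6⁻¹ := bernoulliFun_two (x / 2)
  rw [hb, ← hasSum_nat_add_iff' 1] at h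
  have h2 := h.mul_left ((π ^ 2)⁻¹)
  have hp := pi_pos.ne'
  convert! h2 using 1
  · funext n
    push_cast
    rw [show 2 * π * ((n : ℝ) + 1) * (x / 2) = π * x * (n + 1) by ring]
    have : (n : ℝ) + 1 ≠ 0 := by positivity
    field_simp
  · simp
    field_simp

theorem stmt4 (θ θ' : ℝ) (hθ : θ ∈ Set.Icc (0 : ℝ) 1) (hθ' : θ' ∈ Set.Icc (0 : ℝ) 1) :
    ∫ s in Set.Ioi (0 : ℝ), heatg (2 * s) θ θ' = min θ θ' - θ * θ' := by
  obtain ⟨h0, h1⟩ := hθ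
  obtain ⟨h0', h1'⟩ := hθ'
  set c : ℕ → ℝ := fun n =>
    Real.cos (π * (θ - θ') * (n + 1)) - Real.cos (π * (θ + θ') * (n + 1)) with hc
  set F : ℕ → ℝ → ℝ := fun n s => c n * Real.exp (-(π ^ 2 * ((n : ℝ) + 1) ^ 2) * s) with hF
  have hpos : ∀ n : ℕ, 0 < π ^ 2 * ((n : ℝ) + 1) ^ 2 := fun n => by positivity
  have hexp : ∀ n : ℕ, ∫ s in Set.Ioi (0 : ℝ), Real.exp (-(π ^ 2 * ((n : ℝ) + 1) ^ 2) * s)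
      = (π ^ 2 * ((n : ℝ) + 1) ^ 2)⁻¹ := fun n => by
    rw [integral_exp_mul_Ioi (neg_lt_zero.mpr (hpos n))]
    rw [mul_zero, Real.exp_zero, neg_div_neg_eq, one_div]
  have hint : ∀ n, Integrable (F n) (volume.restrict (Set.Ioi (0 : ℝ))) := fun n =>
    (integrableOn_exp_mul_Ioi (neg_lt_zero.mpr (hpos n)) 0).const_mul (c n)
  have hcos : HasSum (fun n : ℕ => c n * (π ^ 2 * ((n : ℝ) + 1) ^ 2)⁻¹)
      (min θ θ' - θ * θ') := by
    have ha := cos_hasSum |θ - θ'| ⟨abs_nonneg _, by rw [abs_le]; constructor <;> linarith⟩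
    have hb := cos_hasSum (θ + θ') ⟨by linarith, by linarith⟩
    convert! ha.sub hb using 1
    · funext n
      have : Real.cos (π * |θ - θ'| * (n + 1)) = Real.cos (π * (θ - θ') * (n + 1)) := by
        rcases abs_choice (θ - θ') with h | h
        · rw [h]
        · rw [h, ← Real.cos_neg]; congr 1; ring
      rw [this, hc]
      ring
    · rcases le_total θ θ' with h | h
      · rw [min_eq_left h, abs_of_nonpos (by linarith)]; ring
      · rw [min_eq_right h, abs_of_nonneg (by linarith)]; ring
  have hsum : Summable fun n => ∫ s in Set.Ioi (0 : ℝ), ‖F n s‖ := by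
    have : ∀ n, ∫ s in Set.Ioi (0 : ℝ), ‖F n s‖ = ‖c n * (π ^ 2 * ((n : ℝ) + 1) ^ 2)⁻¹‖ := by
      intro n
      simp only [hF, norm_mul, Real.norm_eq_abs, Real.abs_exp]
      rw [integral_const_mul, hexp, abs_of_pos (inv_pos.mpr (hpos n))]
    simp_rw [this]
    exact hcos.summable.norm
  have key := hasSum_integral_of_summable_integral_norm hint hsum
  have e1 : ∀ n, ∫ s in Set.Ioi (0 : ℝ), F n s = c n * (π ^ 2 * ((n : ℝ) + 1) ^ 2)⁻¹ := by
    intro n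
    simp only [hF]
    rw [integral_const_mul, hexp]
  simp_rw [e1] at key
  rw [← key.unique hcos]
  refine setIntegral_congr_fun measurableSet_Ioi fun s hs => ?_
  exact (heatg_hasSum s θ θ' hs).tsum_eq.symm
end

section
/- For every t > 0 and θ, θ' ∈ (0,1): ∫₀¹ ∫₀¹ g_t(θ,σ) (min(σ,σ') - σσ') g_t(θ',σ') dσ dσ' = ∫_t^∞ g_{2s}(θ,θ') ds. (In operator language: e^{tA} Q_∞ e^{tA} = Q_∞ - Q_t, so that if β is a standard Brownian bridge then e^{tA}β is centered Gaussian with covariance kernel q^t(θ,θ') := ∫_t^∞ g_{2s}(θ,θ') ds.) -/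
open MeasureTheory Real Filter

open HurwitzZeta in
theorem heat_poisson (t : ℝ) (ht : 0 < t) (x : ℝ) :
    HasSum (fun n : ℤ => heatK t (x + 2 * (n : ℝ))) (cosKernel ((x / 2 : ℝ) : UnitAddCircle) (π * t / 2) / 2) := by
  have h := (hasSum_int_evenKernel (x / 2) (t := 2 / (π * t)) (by positivity)).mul_left ((Real.sqrt (2 * π * t))⁻¹)
  rw [evenKernel_functional_equation] at h
  convert! h using 1
  · ext n
    unfold heatK
    congr 2
    field_simp
    ring
  · rw [one_div_div, ← Real.sqrt_eq_rpow, one_div, ← Real.sqrt_inv, ← Real.sqrt_inv, inv_div, ← mul_assoc,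
      ← Real.sqrt_mul (by positivity)]
    rw [show (2 * π * t)⁻¹ * (π * t / 2) = (1/2)^2 by field_simp, Real.sqrt_sq (by norm_num)]
    ring

/-- The Fourier frequency. -/
noncomputable def fr (n : ℕ) : ℝ := π * (n + 1)

theorem fr_pos (n : ℕ) : 0 < fr n := by unfold fr; positivity

open HurwitzZeta in
theorem heatg_hasSum_s5 (t : ℝ) (ht : 0 < t) (x y : ℝ) :
    HasSum (fun n : ℕ => 2 * exp (-(t / 2) * fr n ^ 2) * sin (fr n * x) * sin (fr n * y))
      (heatg t x y) := by
  have h1 := (heat_poisson t ht (x - y)).sub (heat_poisson t ht (x + y))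
  have h2 := ((hasSum_nat_cosKernel₀ ((x - y) / 2) (t := π * t / 2) (by positivity)).sub
    (hasSum_nat_cosKernel₀ ((x + y) / 2) (t := π * t / 2) (by positivity))).mul_left (1 / 2)
  unfold heatg
  rw [h1.tsum_eq]
  convert! h2 using 1
  · ext n
    have e1 : 2 * π * ((x - y) / 2) * (n + 1) = fr n * x - fr n * y := by unfold fr; ring
    have e2 : 2 * π * ((x + y) / 2) * (n + 1) = fr n * x + fr n * y := by unfold fr; ring
    have e3 : -π * (n + 1 : ℝ) ^ 2 * (π * t / 2) = -(t / 2) * fr n ^ 2 := by unfold fr; ring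
    rw [e1, e2, e3, cos_sub, cos_add]
    ring
  · ring

theorem coef_summable (t : ℝ) (ht : 0 < t) : Summable (fun n : ℕ => exp (-t * fr n ^ 2)) := by
  refine Real.summable_exp_nat_mul_of_ge (by linarith) fun i => ?_
  unfold fr
  have : (1:ℝ) ≤ π := by linarith [Real.pi_gt_three]
  have hi : (0:ℝ) ≤ i := by positivity
  have : (i + 1 : ℝ) ≤ π * (i + 1) := by nlinarith
  nlinarith

theorem swap (c : ℕ → ℝ) (hc : Summable c) (f : ℝ → ℝ) (hf : Continuous f) :
    HasSum (fun n => c n * ∫ x in (0:ℝ)..1, f x * sin (fr n * x))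
      (∫ x in (0:ℝ)..1, f x * ∑' n, c n * sin (fr n * x)) := by
  simp_rw [← intervalIntegral.integral_const_mul]
  have hs : Summable fun n => |c n| := hc.abs
  have hb : ∀ n x, ‖c n * sin (fr n * x)‖ ≤ |c n| := fun n x => by
    rw [norm_mul, Real.norm_eq_abs, Real.norm_eq_abs]
    exact mul_le_of_le_one_right (abs_nonneg _) (abs_sin_le_one _)
  refine intervalIntegral.hasSum_integral_of_dominated_convergence (fun n x => |c n| * |f x|) ?_ ?_ ?_ ?_ ?_
  · intro n
    exact (by fun_prop : Continuous fun x => c n * (f x * sin (fr n * x))).aestronglyMeasurable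
  · refine fun n => ae_of_all _ fun x _ => ?_
    calc ‖c n * (f x * sin (fr n * x))‖ = ‖c n * sin (fr n * x)‖ * |f x| := by
          rw [← Real.norm_eq_abs, ← norm_mul]; ring_nf
      _ ≤ _ := mul_le_mul_of_nonneg_right (hb n x) (abs_nonneg _)
  · exact ae_of_all _ fun x _ => hs.mul_right _
  · simp_rw [tsum_mul_right]
    exact (by fun_prop : Continuous fun x => (∑' n, |c n|) * |f x|).intervalIntegrable _ _
  · refine ae_of_all _ fun x _ => ?_
    have := (Summable.of_norm_bounded hs (hb · x)).hasSum.mul_left (f x)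
    convert! this using 2
    ring

theorem sin_fr (n : ℕ) : sin (fr n) = 0 := by
  unfold fr; rw [mul_comm]; exact_mod_cast Real.sin_nat_mul_pi (n + 1)

theorem bridge (n : ℕ) (s : ℝ) (hs : s ∈ Set.Icc (0:ℝ) 1) :
    ∫ x in (0:ℝ)..1, (min s x - s * x) * sin (fr n * x) = sin (fr n * s) / fr n ^ 2 := by
  have hn := (fr_pos n).ne'
  have hcont : Continuous fun x => (min s x - s * x) * sin (fr n * x) := by fun_prop
  rw [← intervalIntegral.integral_add_adjacent_intervals (b := s)
    (hcont.intervalIntegrable _ _) (hcont.intervalIntegrable _ _)]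
  have d1 : ∀ x, HasDerivAt (fun x => -x * cos (fr n * x) / fr n + sin (fr n * x) / fr n ^ 2)
      (x * sin (fr n * x)) x := by
    intro x
    have hl : HasDerivAt (fun x => fr n * x) (fr n) x := by
      simpa using (hasDerivAt_id x).const_mul (fr n)
    have := (((hasDerivAt_id x).neg.mul hl.cos).div_const (fr n)).add (hl.sin.div_const (fr n ^ 2))
    convert! this using 1
    simp
    field_simp
    ring
  have d2 : ∀ x, HasDerivAt (fun x => - cos (fr n * x) / fr n)
      (sin (fr n * x)) x := by
    intro x
    have hl : HasDerivAt (fun x => fr n * x) (fr n) x := by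
      simpa using (hasDerivAt_id x).const_mul (fr n)
    have := (hl.cos.neg.div_const (fr n))
    convert! this using 1
    field_simp
  have i1 : ∫ x in (0:ℝ)..s, (min s x - s * x) * sin (fr n * x)
      = ∫ x in (0:ℝ)..s, (1 - s) * (x * sin (fr n * x)) := by
    refine intervalIntegral.integral_congr fun x hx => ?_
    rw [Set.uIcc_of_le hs.1] at hx
    simp only [min_eq_right hx.2]; ring
  have i2 : ∫ x in s..1, (min s x - s * x) * sin (fr n * x)
      = ∫ x in s..1, s * (sin (fr n * x) - x * sin (fr n * x)) := by
    refine intervalIntegral.integral_congr fun x hx => ?_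
    rw [Set.uIcc_of_le hs.2] at hx
    simp only [min_eq_left hx.1]; ring
  rw [i1, i2, intervalIntegral.integral_eq_sub_of_hasDerivAt (fun x _ => (d1 x).const_mul (1 - s))
    ((by fun_prop : Continuous _).intervalIntegrable _ _),
    intervalIntegral.integral_eq_sub_of_hasDerivAt (fun x _ => ((d2 x).sub (d1 x)).const_mul s)
    ((by fun_prop : Continuous _).intervalIntegrable _ _)]
  simp [sin_fr]
  field_simp
  ring

theorem orth (n m : ℕ) :
    ∫ x in (0:ℝ)..1, sin (fr m * x) * sin (fr n * x) = if m = n then 1 / 2 else 0 := by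
  have e : ∀ x, sin (fr m * x) * sin (fr n * x)
      = (cos ((fr m - fr n) * x) - cos ((fr m + fr n) * x)) / 2 := fun x => by
    rw [sub_mul, add_mul, cos_sub, cos_add]; ring
  simp_rw [e]
  have key : ∀ k : ℤ, k ≠ 0 → ∫ x in (0:ℝ)..1, cos ((π * k) * x) = 0 := by
    intro k hk
    have : (π * k : ℝ) ≠ 0 := by positivity
    rw [intervalIntegral.integral_comp_mul_left (fun x => cos x) this, integral_cos]
    simp [mul_comm π, Real.sin_int_mul_pi]
  have a2 : fr m + fr n = π * ((m + n + 2 : ℤ) : ℝ) := by unfold fr; push_cast; ring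
  have a1 : fr m - fr n = π * ((m - n : ℤ) : ℝ) := by unfold fr; push_cast; ring
  rw [intervalIntegral.integral_div, intervalIntegral.integral_sub
    ((by fun_prop : Continuous _).intervalIntegrable _ _)
    ((by fun_prop : Continuous _).intervalIntegrable _ _), a2, key _ (by omega)]
  split_ifs with h
  · subst h; simp
  · rw [a1, key _ (by omega)]; simp

theorem fr_ge (n : ℕ) : 1 ≤ fr n ^ 2 := by
  unfold fr
  have : (3:ℝ) ≤ π := by linarith [Real.pi_gt_three]
  have hi : (0:ℝ) ≤ n := by positivity
  nlinarith [mul_nonneg hi hi, mul_le_mul this (by linarith : (1:ℝ) ≤ n + 1) (by norm_num) (by linarith)]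

theorem coef2_summable (t : ℝ) (ht : 0 < t) (x : ℝ) :
    Summable (fun n : ℕ => 2 * exp (-(t / 2) * fr n ^ 2) * sin (fr n * x)) := by
  refine Summable.of_norm_bounded ((coef_summable (t / 2) (by linarith)).mul_left 2) fun n => ?_
  rw [norm_mul, Real.norm_of_nonneg (by positivity)]
  exact mul_le_of_le_one_right (by positivity) (abs_sin_le_one _)

theorem rhs_hasSum (t : ℝ) (ht : 0 < t) (x y : ℝ) :
    HasSum (fun n : ℕ => 2 * sin (fr n * x) * sin (fr n * y) * (exp (-t * fr n ^ 2) / fr n ^ 2))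
      (∫ s in Set.Ioi t, heatg (2 * s) x y) := by
  have hI : ∀ n, ∫ s in Set.Ioi t, exp (-(fr n ^ 2) * s) = exp (-t * fr n ^ 2) / fr n ^ 2 := by
    intro n
    rw [integral_exp_mul_Ioi (by have := fr_pos n; simp; positivity)]
    rw [neg_div_neg_eq]; ring_nf
  have h := hasSum_integral_of_summable_integral_norm (μ := volume.restrict (Set.Ioi t))
    (F := fun (n : ℕ) s => 2 * sin (fr n * x) * sin (fr n * y) * exp (-(fr n ^ 2) * s)) ?_ ?_
  · simp_rw [integral_const_mul, hI] at h
    convert! h using 1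
    refine setIntegral_congr_fun (measurableSet_Ioi (a := t)) fun s hs => ?_
    simp only [Set.mem_Ioi] at hs
    rw [← (heatg_hasSum_s5 (2 * s) (by linarith) x y).tsum_eq]
    refine tsum_congr fun n => ?_
    ring_nf
  · intro n
    exact (integrableOn_exp_mul_Ioi (by have := fr_pos n; simp; positivity) t).const_mul _
  · have : ∀ n s, ‖2 * sin (fr n * x) * sin (fr n * y) * exp (-(fr n ^ 2) * s)‖
        = ‖2 * sin (fr n * x) * sin (fr n * y)‖ * exp (-(fr n ^ 2) * s) := fun n s => by
      rw [norm_mul, Real.norm_of_nonneg (exp_pos _).le]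
    simp_rw [this, integral_const_mul, hI]
    refine Summable.of_nonneg_of_le (fun n => by positivity) (fun n => ?_)
      ((coef_summable t ht).mul_left 2)
    refine mul_le_mul ?_ (div_le_self (exp_pos _).le (fr_ge n)) (by positivity) (by norm_num)
    rw [mul_assoc, norm_mul, norm_mul, Real.norm_of_nonneg (by norm_num : (0:ℝ) ≤ 2)]
    have := abs_sin_le_one (fr n * x)
    have := abs_sin_le_one (fr n * y)
    have : |sin (fr n * x)| * |sin (fr n * y)| ≤ 1 := mul_le_one₀ ‹_› (abs_nonneg _) ‹_›
    simp only [Real.norm_eq_abs]; linarith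

theorem stmt5 (t : ℝ) (ht : 0 < t) (θ θ' : ℝ)
    (hθ : θ ∈ Set.Ioo (0 : ℝ) 1) (hθ' : θ' ∈ Set.Ioo (0 : ℝ) 1) :
    ∫ σ in (0 : ℝ)..1, ∫ σ' in (0 : ℝ)..1,
        heatg t θ σ * (min σ σ' - σ * σ') * heatg t θ' σ' =
      ∫ s in Set.Ioi t, heatg (2 * s) θ θ' := by
  have hg : ∀ x y, heatg t x y = ∑' n, 2 * exp (-(t / 2) * fr n ^ 2) * sin (fr n * x) * sin (fr n * y) :=
    fun x y => (heatg_hasSum_s5 t ht x y).tsum_eq.symm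
  let d : ℕ → ℝ := fun n => 2 * exp (-(t / 2) * fr n ^ 2) * sin (fr n * θ') / fr n ^ 2
  have hd : Summable d := by
    refine Summable.of_norm_bounded (coef2_summable t ht θ').norm fun n => ?_
    simp only [d]
    rw [norm_div, Real.norm_of_nonneg (by positivity : 0 ≤ fr n ^ 2)]
    exact div_le_self (norm_nonneg _) (fr_ge n)
  let H : ℝ → ℝ := fun σ => ∑' n, d n * sin (fr n * σ)
  have hH : Continuous H := by
    refine continuous_tsum (u := fun n => |d n|) (fun n => by fun_prop) hd.abs fun n x => ?_
    rw [norm_mul, Real.norm_eq_abs, Real.norm_eq_abs]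
    exact mul_le_of_le_one_right (abs_nonneg _) (abs_sin_le_one _)
  have inner : ∀ σ ∈ Set.Icc (0:ℝ) 1, ∫ σ' in (0 : ℝ)..1,
      heatg t θ σ * (min σ σ' - σ * σ') * heatg t θ' σ' = H σ * heatg t θ σ := by
    intro σ hσ
    simp_rw [mul_assoc, intervalIntegral.integral_const_mul]
    rw [mul_comm]
    congr 1
    simp_rw [hg θ']
    rw [← (swap _ (coef2_summable t ht θ') (fun x => min σ x - σ * x) (by fun_prop)).tsum_eq]
    refine tsum_congr fun n => ?_
    rw [bridge n σ hσ]
    simp only [d]; ring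
  have outer : ∫ σ in (0 : ℝ)..1, ∫ σ' in (0 : ℝ)..1,
        heatg t θ σ * (min σ σ' - σ * σ') * heatg t θ' σ' = ∫ σ in (0 : ℝ)..1, H σ * heatg t θ σ := by
    refine intervalIntegral.integral_congr fun x hx => ?_
    rw [Set.uIcc_of_le zero_le_one] at hx
    exact inner x hx
  rw [outer, ← (rhs_hasSum t ht θ θ').tsum_eq]
  simp_rw [hg θ]
  rw [← (swap _ (coef2_summable t ht θ) H hH).tsum_eq]
  refine tsum_congr fun n => ?_
  have hHn : ∫ x in (0:ℝ)..1, H x * sin (fr n * x) = d n / 2 := by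
    have h := (swap d hd (fun x => sin (fr n * x)) (by fun_prop)).tsum_eq
    simp_rw [orth] at h
    simp only [mul_comm (H _)]
    rw [← h, tsum_eq_single n (fun b hb => by simp [Ne.symm hb])]
    simp [div_eq_mul_inv]
  rw [hHn]
  have : exp (-t * fr n ^ 2) = exp (-(t / 2) * fr n ^ 2) * exp (-(t / 2) * fr n ^ 2) := by
    rw [← exp_add]; ring_nf
  rw [this]
  simp only [d]
  ring
end

section
/- The constant c₁ := sup_{r>0} (2r³)^{-1/2} exp(-1/(8r)) is finite, and for every θ ∈ [0, 1/2] and t > 0: ∫₀^{2t} (1/(2√(2πr))) · exp(-(1-θ)²/(2r)) · (1 - exp(-2θ/r)) dr ≤ (2c₁/√π) · t · θ. -/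
open Real

/-- The range of `r ↦ (2r³)^{-1/2} exp(-1/(8r))` over `r > 0`; its supremum is `c₁`. -/
def c1Set : Set ℝ :=
  (fun r : ℝ => (Real.sqrt (2 * r ^ 3))⁻¹ * Real.exp (-(1 / (8 * r)))) '' Set.Ioi 0

theorem c1_bdd : BddAbove c1Set := by
  refine ⟨1537, ?_⟩
  rintro _ ⟨r, hr, rfl⟩
  have hr : 0 < r := hr
  dsimp only
  have hs : 0 < Real.sqrt (2 * r ^ 3) := Real.sqrt_pos.2 (by positivity)
  have hs2 : Real.sqrt (2 * r ^ 3) ^ 2 = 2 * r ^ 3 := Real.sq_sqrt (by positivity)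
  have hx : 0 ≤ 1 / (8 * r) := by positivity
  have h3 := Real.pow_div_factorial_le_exp (1 / (8 * r)) hx 3
  have h1 := Real.one_le_exp hx
  have h6 : ((Nat.factorial 3 : ℕ) : ℝ) = 6 := by norm_num [Nat.factorial]
  rw [h6] at h3
  have hinv : ((Real.sqrt (2 * r ^ 3))⁻¹) ^ 2 = 256 * (1 / (8 * r)) ^ 3 := by
    rw [inv_pow, hs2]; field_simp; norm_num
  rw [Real.exp_neg, ← div_eq_mul_inv, div_le_iff₀ (Real.exp_pos _)]
  nlinarith [sq_nonneg ((Real.sqrt (2 * r ^ 3))⁻¹ - 1), sq_nonneg ((Real.sqrt (2 * r ^ 3))⁻¹)]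

theorem stmt8 :
    BddAbove c1Set ∧
    ∀ θ ∈ Set.Icc (0 : ℝ) (1 / 2), ∀ t : ℝ, 0 < t →
      ∫ r in (0 : ℝ)..(2 * t),
          1 / (2 * Real.sqrt (2 * Real.pi * r)) * Real.exp (-(1 - θ) ^ 2 / (2 * r)) *
            (1 - Real.exp (-(2 * θ) / r)) ≤
        2 * sSup c1Set / Real.sqrt Real.pi * t * θ := by
  refine ⟨c1_bdd, ?_⟩
  rintro θ ⟨h0, h1⟩ t ht
  have key : ∀ r ∈ Set.uIoc (0 : ℝ) (2 * t),
      ‖1 / (2 * Real.sqrt (2 * Real.pi * r)) * Real.exp (-(1 - θ) ^ 2 / (2 * r)) *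
            (1 - Real.exp (-(2 * θ) / r))‖ ≤ sSup c1Set / Real.sqrt Real.pi * θ := by
    intro r hr
    rw [Set.uIoc_of_le (by positivity)] at hr
    have hr : 0 < r := hr.1
    have hpi := Real.pi_pos
    have hA : Real.exp (-(1 - θ) ^ 2 / (2 * r)) ≤ Real.exp (-(1 / (8 * r))) := by
      apply Real.exp_le_exp.2
      rw [neg_div, neg_le_neg_iff, div_le_div_iff₀ (by positivity) (by positivity)]
      nlinarith [mul_nonneg hr.le (mul_nonneg (sub_nonneg.2 h1) (by linarith : 0 ≤ 3 / 2 - θ))]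
    have hB : 1 - Real.exp (-(2 * θ) / r) ≤ 2 * θ / r := by
      have := Real.add_one_le_exp (-(2 * θ) / r)
      rw [neg_div] at this ⊢
      linarith
    have hB0 : 0 ≤ 1 - Real.exp (-(2 * θ) / r) := by
      rw [sub_nonneg, Real.exp_le_one_iff, neg_div]
      have : 0 ≤ 2 * θ / r := by positivity
      linarith
    have hc : (Real.sqrt (2 * r ^ 3))⁻¹ * Real.exp (-(1 / (8 * r))) ≤ sSup c1Set :=
      le_csSup c1_bdd ⟨r, hr, rfl⟩
    rw [Real.norm_of_nonneg (by positivity)]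
    have e1 : Real.sqrt (2 * Real.pi * r) * r = Real.sqrt (2 * r ^ 3) * Real.sqrt Real.pi := by
      rw [← Real.sqrt_mul (by positivity), ← Real.sqrt_sq hr.le, ← Real.sqrt_mul (by positivity),
        Real.sqrt_sq hr.le]
      congr 1; ring
    calc _ ≤ 1 / (2 * Real.sqrt (2 * Real.pi * r)) * Real.exp (-(1 / (8 * r))) * (2 * θ / r) := by
          gcongr
      _ = Real.exp (-(1 / (8 * r))) * θ / (Real.sqrt (2 * Real.pi * r) * r) := by
          field_simp
      _ = ((Real.sqrt (2 * r ^ 3))⁻¹ * Real.exp (-(1 / (8 * r)))) / Real.sqrt Real.pi * θ := by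
          rw [e1]; field_simp
      _ ≤ _ := by gcongr
  have h := intervalIntegral.norm_integral_le_of_norm_le_const key
  rw [sub_zero, abs_of_pos (by positivity)] at h
  refine (le_abs_self _).trans (h.trans (le_of_eq ?_))
  ring
end

section
/- Fix θ ∈ (0,1) and a measurable function m : (0,∞) → ℝ³, and define F(a) := ∫₀^∞ e^{-t} (2π q_t(θ,θ))^{-3/2} exp( -|m(t) - a|²/(2 q_t(θ,θ)) ) dt for a ∈ ℝ³. Then F(a) is finite for every a ∈ ℝ³, the map a ↦ F(a) is continuous, and there is a constant C < ∞, independent of θ, m and a, such that θ^{3/2} (1-θ)^{3/2} F(a) ≤ C for all θ ∈ (0,1), all measurable m and all a ∈ ℝ³. -/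
open MeasureTheory Real Filter

/-- The 1-potential `U₃^{θ,a}` of the 3-dimensional random string, evaluated along a
curve `m` (the heat evolution of the initial datum at the point `θ`). -/
noncomputable def potU (θ : ℝ) (m : ℝ → EuclideanSpace ℝ (Fin 3))
    (a : EuclideanSpace ℝ (Fin 3)) : ℝ :=
  ∫ t in Set.Ioi (0 : ℝ),
    Real.exp (-t) * (2 * Real.pi * qker t θ θ) ^ (-(3 : ℝ) / 2) *
      Real.exp (-‖m t - a‖ ^ 2 / (2 * qker t θ θ))

lemma aux_cos (a : ℝ) {t : ℝ} (ht : 0 < t) :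
    HasSum (fun n : ℤ => Real.cos (2 * π * a * n) * Real.exp (-π * n ^ 2 * t))
      (HurwitzZeta.cosKernel a t) := by
  have h := Complex.hasSum_re (HurwitzZeta.hasSum_int_cosKernel a ht)
  rw [Complex.ofReal_re] at h
  convert h using 2 with n
  have : (2 * (π:ℂ) * Complex.I * a * n) = ((2 * π * a * n : ℝ) : ℂ) * Complex.I := by
    push_cast; ring
  rw [this, Complex.re_mul_ofReal, Complex.exp_ofReal_mul_I_re]

lemma aux_even (x : ℝ) {t : ℝ} (ht : 0 < t) :
    HasSum (fun n : ℤ => heatK (2 * t) (2 * x + 2 * n))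
      (1 / 2 * HurwitzZeta.cosKernel x (π * t)) := by
  have hy : 0 < 1 / (π * t) := by positivity
  have h := (HurwitzZeta.hasSum_int_evenKernel x hy).mul_left (Real.sqrt (2 * π * (2 * t)))⁻¹
  rw [HurwitzZeta.evenKernel_functional_equation, one_div_one_div, ← Real.sqrt_eq_rpow] at h
  have e : (Real.sqrt (2 * π * (2 * t)))⁻¹ * (1 / √(1 / (π * t)) * HurwitzZeta.cosKernel x (π * t))
      = 1 / 2 * HurwitzZeta.cosKernel x (π * t) := by
    have h1 : Real.sqrt (2 * π * (2 * t)) = 2 * √(π * t) := by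
      rw [show 2 * π * (2 * t) = 2 ^ 2 * (π * t) by ring, Real.sqrt_mul (by norm_num),
        Real.sqrt_sq (by norm_num)]
    have h2 : √(1 / (π * t)) = (√(π * t))⁻¹ := by rw [one_div, Real.sqrt_inv]
    have h3 : √(π * t) ≠ 0 := by positivity
    rw [h1, h2]
    field_simp
  rw [e] at h
  refine h.congr_fun fun n => ?_
  unfold heatK
  congr 2
  have := Real.pi_ne_zero
  field_simp
  ring

lemma aux_g (θ : ℝ) {t : ℝ} (ht : 0 < t) :
    heatg (2 * t) θ θ =
      ∑' n : ℤ, Real.sin (π * n * θ) ^ 2 * Real.exp (-(π ^ 2 * n ^ 2) * t) := by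
  have hp : 0 < π * t := by positivity
  have h := (aux_even 0 ht).sub (aux_even θ ht)
  have h1 : heatg (2 * t) θ θ = 1 / 2 * HurwitzZeta.cosKernel (0:ℝ) (π * t)
      - 1 / 2 * HurwitzZeta.cosKernel θ (π * t) := by
    rw [← h.tsum_eq]
    unfold heatg
    congr 1
    funext n
    congr 2 <;> ring
  rw [h1]
  have h2 := ((aux_cos 0 hp).mul_left (1 / 2)).sub ((aux_cos θ hp).mul_left (1 / 2))
  rw [← h2.tsum_eq]
  congr 1
  funext n
  rw [Real.sin_sq_eq_half_sub, show 2 * π * θ * n = 2 * (π * n * θ) by ring,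
    show -π * (n:ℝ) ^ 2 * (π * t) = -(π ^ 2 * n ^ 2) * t by ring]
  simp
  ring

/-- the k-th mode of `q`. -/
noncomputable def qmode (θ t : ℝ) (n : ℤ) : ℝ :=
  Real.sin (π * n * θ) ^ 2 * ((1 - Real.exp (-(π ^ 2 * n ^ 2) * t)) / (π ^ 2 * n ^ 2))

lemma qmode_integral (θ : ℝ) {t : ℝ} (ht : 0 ≤ t) (n : ℤ) :
    ∫ s in Set.Ioc (0:ℝ) t, Real.sin (π * n * θ) ^ 2 * Real.exp (-(π ^ 2 * n ^ 2) * s)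
      = qmode θ t n := by
  unfold qmode
  rw [integral_const_mul, ← intervalIntegral.integral_of_le ht]
  by_cases hn : n = 0
  · subst hn; simp
  have hn' : (n:ℝ) ≠ 0 := by exact_mod_cast hn
  have hc : -(π ^ 2 * (n:ℝ) ^ 2) ≠ 0 := by
    have := Real.pi_ne_zero
    simp [hn', this]
  rw [intervalIntegral.integral_comp_mul_left (fun x => Real.exp x) hc, integral_exp]
  congr 1
  have := Real.pi_ne_zero
  simp only [mul_zero, Real.exp_zero, smul_eq_mul]
  field_simp
  ring

lemma qmode_nonneg (θ : ℝ) {t : ℝ} (ht : 0 ≤ t) (n : ℤ) : 0 ≤ qmode θ t n := by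
  unfold qmode
  have : Real.exp (-(π ^ 2 * n ^ 2) * t) ≤ 1 := by
    rw [Real.exp_le_one_iff]
    have : 0 ≤ (π ^ 2 * (n:ℝ) ^ 2) * t := by positivity
    linarith
  have h1 : 0 ≤ 1 - Real.exp (-(π ^ 2 * n ^ 2) * t) := by linarith
  positivity

lemma qmode_summable (θ : ℝ) {t : ℝ} (ht : 0 ≤ t) : Summable (qmode θ t) := by
  have h : Summable (fun n : ℤ => 1 / (n:ℝ) ^ 2 * (1 / π ^ 2)) :=
    (Real.summable_one_div_int_pow.mpr (by norm_num : 1 < 2)).mul_right _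
  refine Summable.of_nonneg_of_le (qmode_nonneg θ ht) (fun n => ?_) h
  unfold qmode
  have h1 : Real.sin (π * n * θ) ^ 2 ≤ 1 := Real.sin_sq_le_one _
  have h2 : (1 - Real.exp (-(π ^ 2 * n ^ 2) * t)) / (π ^ 2 * n ^ 2) ≤ 1 / (π ^ 2 * n ^ 2) := by
    gcongr
    linarith [Real.exp_pos (-(π ^ 2 * n ^ 2) * t)]
  calc _ ≤ Real.sin (π * n * θ) ^ 2 * (1 / (π ^ 2 * n ^ 2)) := by gcongr
    _ ≤ 1 * (1 / (π ^ 2 * n ^ 2)) := by gcongr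
    _ = _ := by rw [one_mul, one_div_mul_one_div, mul_comm]

lemma qker_hasSum (θ : ℝ) {t : ℝ} (ht : 0 ≤ t) : HasSum (qmode θ t) (qker t θ θ) := by
  have h := hasSum_integral_of_summable_integral_norm
    (μ := volume.restrict (Set.Ioc (0:ℝ) t))
    (F := fun (n : ℤ) (s : ℝ) => Real.sin (π * n * θ) ^ 2 * Real.exp (-(π ^ 2 * n ^ 2) * s))
    (fun n => by
      have : Continuous (fun s : ℝ =>
        Real.sin (π * n * θ) ^ 2 * Real.exp (-(π ^ 2 * n ^ 2) * s)) := by fun_prop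
      exact (this.integrableOn_Icc (a := 0) (b := t)).mono_set Set.Ioc_subset_Icc_self)
    (by
      have : ∀ (n : ℤ) (s : ℝ),
        ‖Real.sin (π * n * θ) ^ 2 * Real.exp (-(π ^ 2 * n ^ 2) * s)‖
          = Real.sin (π * n * θ) ^ 2 * Real.exp (-(π ^ 2 * n ^ 2) * s) := fun n s =>
        Real.norm_of_nonneg (by positivity)
      simp_rw [this, qmode_integral θ ht]
      exact qmode_summable θ ht)
  simp_rw [qmode_integral θ ht] at h
  have e : qker t θ θ = ∫ s in Set.Ioc (0:ℝ) t,
      ∑' n : ℤ, Real.sin (π * n * θ) ^ 2 * Real.exp (-(π ^ 2 * n ^ 2) * s) := by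
    unfold qker
    refine setIntegral_congr_fun measurableSet_Ioc fun s hs => ?_
    exact aux_g θ hs.1
  rw [e]
  exact h

lemma qker_mono (θ : ℝ) {s t : ℝ} (hs : 0 ≤ s) (hst : s ≤ t) : qker s θ θ ≤ qker t θ θ := by
  refine hasSum_le (fun n => ?_) (qker_hasSum θ hs) (qker_hasSum θ (hs.trans hst))
  unfold qmode
  have : Real.exp (-(π ^ 2 * n ^ 2) * t) ≤ Real.exp (-(π ^ 2 * n ^ 2) * s) := by
    rw [Real.exp_le_exp]
    have : π ^ 2 * (n:ℝ) ^ 2 * s ≤ π ^ 2 * (n:ℝ) ^ 2 * t := by gcongr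
    linarith
  gcongr

lemma sin_pair (x y : ℝ) : Real.sin y ^ 2 / 2 ≤ Real.sin x ^ 2 + Real.sin (x + y) ^ 2 := by
  have h : Real.sin y = Real.sin (x + y) * Real.cos x - Real.cos (x + y) * Real.sin x := by
    rw [← Real.sin_sub]; congr 1; ring
  have h1 := Real.sin_sq_add_cos_sq x
  have h2 := Real.sin_sq_add_cos_sq (x + y)
  set a := Real.sin (x + y)
  set b := Real.cos (x + y)
  set c := Real.sin x
  set d := Real.cos x
  have h3 : (a * d - b * c) ^ 2 ≤ 2 * ((a * d) ^ 2 + (b * c) ^ 2) := by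
    nlinarith [sq_nonneg (a * d + b * c)]
  have h4 : (a * d) ^ 2 ≤ a ^ 2 := by
    rw [mul_pow]; nlinarith [sq_nonneg a, sq_nonneg c, mul_nonneg (sq_nonneg a) (sq_nonneg c)]
  have h5 : (b * c) ^ 2 ≤ c ^ 2 := by
    rw [mul_pow]; nlinarith [sq_nonneg a, sq_nonneg c, mul_nonneg (sq_nonneg a) (sq_nonneg c)]
  rw [h]; linarith

lemma exists_j_half {θ : ℝ} (h0 : 0 < θ) (h1 : θ ≤ 1 / 2) :
    ∃ j : ℕ, 1 ≤ j ∧ θ * j ≤ 1 ∧ 1 / 2 ≤ Real.sin (π * j * θ) ^ 2 := by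
  have hp : 0 < 1 / (4 * θ) := by positivity
  refine ⟨⌈1 / (4 * θ)⌉₊, Nat.one_le_ceil_iff.mpr hp, ?_, ?_⟩
  all_goals
    have a1 := Nat.le_ceil (1 / (4 * θ))
    have a2 := Nat.ceil_lt_add_one hp.le
    set j := ⌈1 / (4 * θ)⌉₊
    have b1 : 1 / 4 ≤ θ * j := by
      have := mul_le_mul_of_nonneg_left a1 h0.le
      have e : θ * (1 / (4 * θ)) = 1 / 4 := by field_simp
      linarith
    have b2 : θ * j ≤ 3 / 4 := by
      have := mul_le_mul_of_nonneg_left a2.le h0.le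
      have e : θ * (1 / (4 * θ) + 1) = 1 / 4 + θ := by field_simp
      linarith
  · linarith
  · rw [Real.sin_sq_eq_half_sub]
    have : Real.cos (2 * (π * j * θ)) ≤ 0 := by
      apply Real.cos_nonpos_of_pi_div_two_le_of_le
      · nlinarith [Real.pi_pos]
      · nlinarith [Real.pi_pos]
    linarith

lemma exists_j {θ : ℝ} (h0 : 0 < θ) (h1 : θ < 1) :
    ∃ j : ℕ, 1 ≤ j ∧ θ * (1 - θ) * j ≤ 1 ∧ 1 / 2 ≤ Real.sin (π * j * θ) ^ 2 := by
  rcases le_total θ (1 / 2) with h | h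
  · obtain ⟨j, hj, hj1, hj2⟩ := exists_j_half h0 h
    refine ⟨j, hj, ?_, hj2⟩
    have : (0:ℝ) ≤ j := by positivity
    nlinarith [mul_nonneg h0.le this]
  · obtain ⟨j, hj, hj1, hj2⟩ := exists_j_half (θ := 1 - θ) (by linarith) (by linarith)
    refine ⟨j, hj, ?_, ?_⟩
    · have : (0:ℝ) ≤ j := by positivity
      nlinarith [mul_nonneg (sub_nonneg.mpr h1.le) this]
    · rw [Real.sin_sq_eq_half_sub] at hj2 ⊢
      have e : 2 * (π * j * (1 - θ)) = j * (2 * π) - 2 * (π * j * θ) := by ring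
      rw [e, Real.cos_nat_mul_two_pi_sub] at hj2
      exact hj2

lemma qmode_lower (θ t : ℝ) (M : ℕ) (hM : 1 ≤ M) (hMt : 1 ≤ (M:ℝ) ^ 2 * t) (ht : 0 < t) (n : ℤ)
    (h1 : (M:ℤ) ≤ n) (h2 : n ≤ 3 * M) :
    Real.sin (π * n * θ) ^ 2 * (1 / (18 * π ^ 2 * M ^ 2)) ≤ qmode θ t n := by
  unfold qmode
  have hM' : (1:ℝ) ≤ M := by exact_mod_cast hM
  have h1' : (M:ℝ) ≤ n := by exact_mod_cast h1
  have h2' : (n:ℝ) ≤ 3 * M := by exact_mod_cast h2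
  have hn : (0:ℝ) < n := by linarith
  have hn2 : (M:ℝ) ^ 2 ≤ n ^ 2 := by gcongr
  have a : 1 ≤ π ^ 2 * (n:ℝ) ^ 2 * t := by
    have : (M:ℝ) ^ 2 * t ≤ n ^ 2 * t := by gcongr
    have h3 : 1 ≤ π ^ 2 := by nlinarith [Real.pi_gt_three]
    nlinarith
  have b : Real.exp (-(π ^ 2 * n ^ 2) * t) ≤ 1 / 2 := by
    have c : Real.exp (-(π ^ 2 * n ^ 2) * t) ≤ Real.exp (-1) := by
      rw [Real.exp_le_exp]; linarith
    have := Real.exp_neg_one_lt_half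
    linarith
  have hpi := Real.pi_pos
  refine mul_le_mul_of_nonneg_left ?_ (sq_nonneg _)
  calc 1 / (18 * π ^ 2 * (M:ℝ) ^ 2) = (1 / 2) / (π ^ 2 * (3 * M) ^ 2) := by
        field_simp; ring
    _ ≤ (1 / 2) / (π ^ 2 * n ^ 2) := by gcongr
    _ ≤ _ := by
        gcongr
        linarith

lemma qker_lower_M (θ t : ℝ) (j M : ℕ) (hj : 1 ≤ j) (hjM : j ≤ M)
    (hs : 1 / 2 ≤ Real.sin (π * j * θ) ^ 2)
    (hMt : 1 ≤ (M:ℝ) ^ 2 * t) (ht : 0 < t) :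
    1 / (144 * π ^ 2 * M) ≤ qker t θ θ := by
  have hM : 1 ≤ M := hj.trans hjM
  have hsum := qker_hasSum θ ht.le
  have nn := qmode_nonneg θ ht.le
  have A : ∑ i ∈ Finset.Ico (M:ℤ) (2 * M), qmode θ t i ≤ qker t θ θ :=
    sum_le_hasSum _ (fun i _ => nn i) hsum
  have B : ∑ i ∈ Finset.Ico (M:ℤ) (2 * M), qmode θ t (i + j) ≤ qker t θ θ := by
    have := sum_le_hasSum ((Finset.Ico (M:ℤ) (2 * M)).map (addRightEmbedding (j:ℤ)))
      (fun i _ => nn i) hsum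
    rwa [Finset.sum_map] at this
  have C : ∑ i ∈ Finset.Ico (M:ℤ) (2 * M), (1 / 4 * (1 / (18 * π ^ 2 * (M:ℝ) ^ 2)))
      ≤ ∑ i ∈ Finset.Ico (M:ℤ) (2 * M), (qmode θ t i + qmode θ t (i + j)) := by
    refine Finset.sum_le_sum fun i hi => ?_
    rw [Finset.mem_Ico] at hi
    have h1 := qmode_lower θ t M hM hMt ht i hi.1 (by omega)
    have h2 := qmode_lower θ t M hM hMt ht (i + j) (by omega) (by omega)
    have h3 := sin_pair (π * i * θ) (π * j * θ)
    have e : π * ((i + j : ℤ):ℝ) * θ = π * i * θ + π * j * θ := by push_cast; ring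
    rw [e] at h2
    have hc : 0 ≤ 1 / (18 * π ^ 2 * (M:ℝ) ^ 2) := by positivity
    have h4 : 1 / 4 ≤ Real.sin (π * i * θ) ^ 2 + Real.sin (π * i * θ + π * j * θ) ^ 2 := by
      linarith
    have h5 := mul_le_mul_of_nonneg_right h4 hc
    linarith
  rw [Finset.sum_add_distrib, Finset.sum_const, Int.card_Ico,
    show (2 * (M:ℤ) - M).toNat = M by omega, nsmul_eq_mul] at C
  have hM' : (0:ℝ) < M := by exact_mod_cast hM
  have e : (M:ℝ) * (1 / 4 * (1 / (18 * π ^ 2 * (M:ℝ) ^ 2))) = 2 * (1 / (144 * π ^ 2 * M)) := by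
    have := Real.pi_ne_zero
    field_simp
    norm_num
  linarith

lemma qker_lower {θ t : ℝ} (h0 : 0 < θ) (h1 : θ < 1) (ht : 0 < t) :
    1 / (288 * π ^ 2) * min (√t) (θ * (1 - θ)) ≤ qker t θ θ := by
  obtain ⟨j, hj, hj1, hj2⟩ := exists_j h0 h1
  have hj' : (1:ℝ) ≤ j := by exact_mod_cast hj
  have hpi := Real.pi_pos
  rcases le_total (√t * j) 1 with h | h
  · have hs : 0 < √t := by positivity
    have hs1 : √t ≤ 1 := by nlinarith
    have hp : 0 < 1 / √t := by positivity
    have a1 := Nat.le_ceil (1 / √t)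
    have a2 := Nat.ceil_lt_add_one hp.le
    have hjM : j ≤ ⌈1 / √t⌉₊ := by
      have : (j:ℝ) ≤ 1 / √t := by rw [le_div_iff₀ hs]; linarith
      exact_mod_cast this.trans a1
    have key := qker_lower_M θ t j ⌈1 / √t⌉₊ hj hjM hj2 ?_ ht
    · refine le_trans ?_ key
      have hM : (⌈1 / √t⌉₊ : ℝ) ≤ 2 / √t := by
        have : 1 ≤ 1 / √t := by rw [le_div_iff₀ hs]; linarith
        have e : 2 / √t = 1 / √t + 1 / √t := by ring
        linarith
      have hMpos : (0:ℝ) < ⌈1 / √t⌉₊ := by linarith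
      calc _ ≤ 1 / (288 * π ^ 2) * √t := by gcongr; exact min_le_left _ _
        _ = 1 / (144 * π ^ 2 * (2 / √t)) := by field_simp; norm_num
        _ ≤ _ := by gcongr
    · have : (1 / √t) ^ 2 * t = 1 := by
        rw [div_pow, Real.sq_sqrt ht.le]; field_simp
      calc (1:ℝ) = (1 / √t) ^ 2 * t := this.symm
        _ ≤ _ := by gcongr
  · have hjp : (0:ℝ) < j := by linarith
    have hp : (0:ℝ) < 1 / (j:ℝ) ^ 2 := by positivity
    have key := qker_lower_M θ (1 / (j:ℝ) ^ 2) j j hj le_rfl hj2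
      (by rw [mul_one_div_cancel (by positivity)]) hp
    have hle : 1 / (j:ℝ) ^ 2 ≤ t := by
      rw [div_le_iff₀ (by positivity)]
      have : (√t * j) ^ 2 = t * j ^ 2 := by rw [mul_pow, Real.sq_sqrt ht.le]
      nlinarith
    refine le_trans ?_ (key.trans (qker_mono θ hp.le hle))
    have h2 : θ * (1 - θ) ≤ 1 / j := by rw [le_div_iff₀ hjp]; exact hj1
    calc _ ≤ 1 / (288 * π ^ 2) * (1 / j) := by
            gcongr; exact (min_le_right _ _).trans h2
      _ ≤ 1 / (144 * π ^ 2) * (1 / j) := by gcongr; norm_num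
      _ = _ := by rw [one_div_mul_one_div]

lemma pow_bound {θ t : ℝ} (h0 : 0 < θ) (h1 : θ < 1) (ht : 0 < t) :
    (2 * π * qker t θ θ) ^ (-(3:ℝ) / 2) ≤
      (1 / (144 * π)) ^ (-(3:ℝ) / 2) * (t ^ (-(3:ℝ) / 4) + (θ * (1 - θ)) ^ (-(3:ℝ) / 2)) := by
  have hw : 0 < θ * (1 - θ) := mul_pos h0 (by linarith)
  have hs : 0 < √t := by positivity
  have hm : 0 < min (√t) (θ * (1 - θ)) := lt_min hs hw
  have hpi := Real.pi_pos
  have a : 1 / (144 * π) * min (√t) (θ * (1 - θ)) ≤ 2 * π * qker t θ θ := by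
    have := mul_le_mul_of_nonneg_left (qker_lower h0 h1 ht) (by positivity : 0 ≤ 2 * π)
    refine le_trans (le_of_eq ?_) this
    field_simp
    norm_num
  calc _ ≤ (1 / (144 * π) * min (√t) (θ * (1 - θ))) ^ (-(3:ℝ) / 2) :=
        Real.rpow_le_rpow_of_nonpos (by positivity) a (by norm_num)
    _ = (1 / (144 * π)) ^ (-(3:ℝ) / 2) * (min (√t) (θ * (1 - θ))) ^ (-(3:ℝ) / 2) :=
        Real.mul_rpow (by positivity) hm.le
    _ ≤ _ := by
        gcongr
        have e : t ^ (-(3:ℝ) / 4) = √t ^ (-(3:ℝ) / 2) := by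
          rw [Real.sqrt_eq_rpow, ← Real.rpow_mul ht.le]; norm_num
        rw [e]
        rcases min_choice (√t) (θ * (1 - θ)) with h | h <;> rw [h]
        · have := Real.rpow_nonneg hw.le (-(3:ℝ) / 2); linarith
        · have := Real.rpow_nonneg hs.le (-(3:ℝ) / 2); linarith

lemma int_base : IntegrableOn (fun t : ℝ => Real.exp (-t) * t ^ (-(3:ℝ) / 4)) (Set.Ioi 0) := by
  have := Real.GammaIntegral_convergent (s := 1 / 4) (by norm_num)
  norm_num at this
  convert this using 4
  norm_num

lemma int_exp : IntegrableOn (fun t : ℝ => Real.exp (-t)) (Set.Ioi 0) :=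
  integrableOn_exp_neg_Ioi 0

theorem stmt13 :
    ∃ C : ℝ, ∀ θ ∈ Set.Ioo (0 : ℝ) 1, ∀ m : ℝ → EuclideanSpace ℝ (Fin 3), Measurable m →
      (∀ a : EuclideanSpace ℝ (Fin 3),
        MeasureTheory.IntegrableOn
          (fun t => Real.exp (-t) * (2 * Real.pi * qker t θ θ) ^ (-(3 : ℝ) / 2) *
            Real.exp (-‖m t - a‖ ^ 2 / (2 * qker t θ θ)))
          (Set.Ioi (0 : ℝ))) ∧
      Continuous (potU θ m) ∧
      ∀ a : EuclideanSpace ℝ (Fin 3),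
        θ ^ ((3 : ℝ) / 2) * (1 - θ) ^ ((3 : ℝ) / 2) * potU θ m a ≤ C := by
  refine ⟨(1 / (144 * π)) ^ (-(3:ℝ) / 2) *
    ∫ t in Set.Ioi (0:ℝ), (Real.exp (-t) * t ^ (-(3:ℝ) / 4) + Real.exp (-t)), ?_⟩
  rintro θ ⟨h0, h1⟩ m hm
  set K : ℝ := (1 / (144 * π)) ^ (-(3:ℝ) / 2) with hK
  have hpi := Real.pi_pos
  have hK0 : 0 ≤ K := Real.rpow_nonneg (by positivity) _
  have hw : 0 < θ * (1 - θ) := mul_pos h0 (by linarith)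
  set W : ℝ := (θ * (1 - θ)) ^ (-(3:ℝ) / 2) with hW
  set bd : ℝ → ℝ := fun t => K * (Real.exp (-t) * t ^ (-(3:ℝ) / 4) + W * Real.exp (-t)) with hbd
  have hbdi : IntegrableOn bd (Set.Ioi 0) :=
    (int_base.add (int_exp.const_mul W)).const_mul K
  have hq0 : ∀ t : ℝ, 0 < t → 0 < qker t θ θ := fun t ht => by
    refine lt_of_lt_of_le ?_ (qker_lower h0 h1 ht)
    have : 0 < min (√t) (θ * (1 - θ)) := lt_min (by positivity) hw
    positivity
  have hqm : AEMeasurable (fun t => qker t θ θ) (volume.restrict (Set.Ioi 0)) :=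
    aemeasurable_restrict_of_monotoneOn measurableSet_Ioi
      (fun s hs t _ hst => qker_mono θ (le_of_lt hs) hst)
  set f : EuclideanSpace ℝ (Fin 3) → ℝ → ℝ := fun a t =>
    Real.exp (-t) * (2 * Real.pi * qker t θ θ) ^ (-(3 : ℝ) / 2) *
      Real.exp (-‖m t - a‖ ^ 2 / (2 * qker t θ θ)) with hf
  have hmeas : ∀ a, AEStronglyMeasurable (f a) (volume.restrict (Set.Ioi 0)) := fun a => by
    apply AEMeasurable.aestronglyMeasurable
    have hn : Measurable (fun t => ‖m t - a‖) := (hm.sub_const a).norm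
    refine AEMeasurable.mul (AEMeasurable.mul ?_ ?_) ?_
    · exact (by fun_prop : Measurable fun t : ℝ => Real.exp (-t)).aemeasurable
    · exact (hqm.const_mul (2 * π)).pow_const _
    · exact (((hn.pow_const 2).neg.aemeasurable).div (hqm.const_mul 2)).exp
  have hnn : ∀ a t, 0 < t → 0 ≤ f a t := fun a t ht => by
    have := hq0 t ht
    simp only [hf]
    positivity
  have hle : ∀ a t, 0 < t → f a t ≤ bd t := fun a t ht => by
    have hq := hq0 t ht
    have e1 : Real.exp (-‖m t - a‖ ^ 2 / (2 * qker t θ θ)) ≤ 1 := by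
      rw [Real.exp_le_one_iff]
      apply div_nonpos_of_nonpos_of_nonneg
      · have := sq_nonneg ‖m t - a‖; linarith
      · positivity
    calc f a t ≤ Real.exp (-t) * (2 * Real.pi * qker t θ θ) ^ (-(3 : ℝ) / 2) := by
          simp only [hf]
          exact mul_le_of_le_one_right (by positivity) e1
      _ ≤ Real.exp (-t) * (K * (t ^ (-(3:ℝ) / 4) + W)) := by
          gcongr
          exact pow_bound h0 h1 ht
      _ = bd t := by simp only [hbd]; ring
  have hb : ∀ a, ∀ᵐ t ∂(volume.restrict (Set.Ioi (0:ℝ))), ‖f a t‖ ≤ bd t := fun a =>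
    (ae_restrict_iff' measurableSet_Ioi).mpr (Eventually.of_forall fun t ht => by
      rw [Real.norm_of_nonneg (hnn a t ht)]; exact hle a t ht)
  have hint : ∀ a, IntegrableOn (f a) (Set.Ioi 0) := fun a => Integrable.mono' hbdi (hmeas a) (hb a)
  refine ⟨hint, ?_, fun a => ?_⟩
  · have := continuous_of_dominated hmeas hb hbdi (Eventually.of_forall fun t => by
      simp only [hf]; fun_prop)
    exact this
  · have e : θ ^ ((3 : ℝ) / 2) * (1 - θ) ^ ((3 : ℝ) / 2) = (θ * (1 - θ)) ^ ((3 : ℝ) / 2) :=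
      (Real.mul_rpow h0.le (by linarith)).symm
    rw [e]
    set V : ℝ := (θ * (1 - θ)) ^ ((3 : ℝ) / 2) with hV
    have hVW : V * W = 1 := by
      rw [hV, hW, ← Real.rpow_add hw]; norm_num
    have hV0 : 0 ≤ V := Real.rpow_nonneg hw.le _
    have hV1 : V ≤ 1 := Real.rpow_le_one hw.le (by nlinarith) (by norm_num)
    unfold potU
    rw [← integral_const_mul, ← integral_const_mul]
    refine setIntegral_mono_on ((hint a).const_mul V) ((int_base.add int_exp).const_mul K)
      measurableSet_Ioi fun t ht => ?_
    have ht' : 0 < t := ht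
    calc V * f a t ≤ V * bd t := by gcongr; exact hle a t ht
      _ = K * (V * (Real.exp (-t) * t ^ (-(3:ℝ) / 4)) + V * W * Real.exp (-t)) := by
          simp only [hbd]; ring
      _ ≤ K * (Real.exp (-t) * t ^ (-(3:ℝ) / 4) + Real.exp (-t)) := by
          rw [hVW, one_mul]
          refine mul_le_mul_of_nonneg_left ?_ hK0
          have : V * (Real.exp (-t) * t ^ (-(3:ℝ) / 4)) ≤ Real.exp (-t) * t ^ (-(3:ℝ) / 4) :=
            mul_le_of_le_one_left (by positivity) hV1
          linarith
end
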